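/- For every claim C : Ω → ℝ^d and every p ∈ ℝ^d: p belongs to the indifference sell price bound bd P^s(C) if and only if (i) V(x0 + p, −C) ⊇ V(x0, 0) and (ii) for every ε ∈ ℝ^d with all coordinates strictly positive, V(x0 + p − ε, −C) ⊉ V(x0, 0). -/

import Mathlib

open Pointwise

/-!
The set of sell prices is an upper set, so its boundary consists of its non-interior points as soon
as it is closed, and `p` is interior exactly when some `p - ε` with `ε` in the interior of the
positive cone is still a sell price. Closedness is a concavity argument, not a continuity one: the
values attainable from the endowment `x` form a set-valued map with convex graph, so a value `v`
attainable at `x + δ • e`, averaged with a fixed value attainable at `x - e` with weights chosen to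
cancel `e`, gives a value attainable at `x` which tends to `v` as `δ → 0`.
-/

open Set Filter Topology

section TopologicalModule

variable {X : Type*} [AddCommGroup X] [Module ℝ X] [TopologicalSpace X] [ContinuousSMul ℝ X]

theorem smul_mem_interior_Ici_zero [Preorder X] [PosSMulMono ℝ X] {e : X}
    (he : e ∈ interior (Ici (0 : X))) {δ : ℝ} (hδ : 0 < δ) : δ • e ∈ interior (Ici (0 : X)) := by
  have hcone : δ • Ici (0 : X) ⊆ Ici 0 := by
    rintro _ ⟨x, hx, rfl⟩
    exact smul_nonneg hδ.le hx
  apply interior_mono hcone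
  rw [interior_smul₀ hδ.ne']
  exact smul_mem_smul_set he

theorem exists_pos_sub_smul_mem_of_mem_interior [ContinuousSub X] {s : Set X} {p : X}
    (hp : p ∈ interior s) (e : X) : ∃ δ : ℝ, 0 < δ ∧ p - δ • e ∈ s := by
  have hlim : Tendsto (fun δ : ℝ => p - δ • e) (𝓝[>] 0) (𝓝 p) := by
    have hcont : Continuous fun δ : ℝ => p - δ • e := by fun_prop
    simpa using (hcont.tendsto 0).mono_left nhdsWithin_le_nhds
  have hmem : ∀ᶠ δ : ℝ in 𝓝[>] 0, p - δ • e ∈ s := hlim (mem_interior_iff_mem_nhds.1 hp)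
  exact (eventually_mem_nhdsWithin.and hmem).exists

end TopologicalModule

section UpperSet

variable {X : Type*} [AddCommGroup X] [Preorder X] [IsOrderedAddMonoid X] [TopologicalSpace X]
  [IsTopologicalAddGroup X] {s : Set X} {p e : X}

theorem add_mem_interior_of_mem_closure (hs : IsUpperSet s) (hp : p ∈ closure s)
    (he : e ∈ interior (Ici (0 : X))) : p + e ∈ interior s := by
  have hopen : IsOpen {q | p + e - q ∈ interior (Ici (0 : X))} :=
    isOpen_interior.preimage (continuous_sub_left _)
  obtain ⟨q, hq, hqs⟩ := mem_closure_iff.1 hp _ hopen (by simpa using he)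
  refine mem_interior.2 ⟨{y | y - q ∈ interior (Ici (0 : X))}, fun y hy => ?_,
    isOpen_interior.preimage (continuous_sub_right q), hq⟩
  exact hs (sub_nonneg.1 (interior_subset hy)) hqs

variable [Module ℝ X] [ContinuousSMul ℝ X]

theorem mem_frontier_iff_of_isUpperSet [PosSMulMono ℝ X] (hs : IsUpperSet s) (hclosed : IsClosed s)
    (hcone : (interior (Ici (0 : X))).Nonempty) :
    p ∈ frontier s ↔ p ∈ s ∧ ∀ ε ∈ interior (Ici (0 : X)), p - ε ∉ s := by
  rw [hclosed.frontier_eq, Set.mem_sdiff]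
  refine and_congr_right fun _ => ⟨fun hp ε hε hmem => hp ?_, fun h hp => ?_⟩
  · simpa using add_mem_interior_of_mem_closure hs (subset_closure hmem) hε
  · obtain ⟨e, he⟩ := hcone
    obtain ⟨δ, hδ, hmem⟩ := exists_pos_sub_smul_mem_of_mem_interior hp e
    exact h _ (smul_mem_interior_Ici_zero he hδ) hmem

end UpperSet

theorem interior_Ici_zero_pi (ι : Type*) [Finite ι] :
    interior (Ici (0 : ι → ℝ)) = {ε | ∀ i, 0 < ε i} := by
  rw [← pi_univ_Ici, interior_pi_set finite_univ]
  ext ε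
  simp only [interior_Ici, mem_univ_pi, Pi.zero_apply, mem_Ioi, mem_ofPred_eq]

theorem nonempty_interior_Ici_zero_pi (ι : Type*) [Finite ι] :
    (interior (Ici (0 : ι → ℝ))).Nonempty := by
  rw [interior_Ici_zero_pi]
  exact ⟨1, fun _ => one_pos⟩

section ConvexGraph

variable {X E F : Type*} [AddCommGroup X] [Module ℝ X] [AddCommGroup E] [Module ℝ E]
  [AddCommGroup F] [Module ℝ F]

theorem convex_graph_of_smul_add_smul_subset {A : X → Set E}
    (hA : ∀ (x y : X) (a : ℝ), 0 ≤ a → a ≤ 1 → a • A x + (1 - a) • A y ⊆ A (a • x + (1 - a) • y)) :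
    Convex ℝ {z : X × E | z.2 ∈ A z.1} := by
  intro z hz w hw a b ha hb hab
  obtain rfl : b = 1 - a := by linarith
  exact hA z.1 w.1 a ha (by linarith) (add_mem_add (smul_mem_smul_set hz) (smul_mem_smul_set hw))

variable [TopologicalSpace F] [ContinuousAdd F] [ContinuousSMul ℝ F]

theorem mem_closure_of_forall_mem_closure_add_smul {S : X → Set F}
    (hS : Convex ℝ {z : X × F | z.2 ∈ S z.1}) {x e : X} {v w : F} (hw : w ∈ S (x - e))
    (hv : ∀ δ : ℝ, 0 < δ → v ∈ closure (S (x + δ • e))) : v ∈ closure (S x) := by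
  let average : ℝ → F → F := fun δ v' => (1 + δ)⁻¹ • v' + (δ / (1 + δ)) • w
  have haverage : ∀ δ : ℝ, 0 < δ → average δ v ∈ closure (S x) := by
    intro δ hδ
    have hcont : Continuous (average δ) := by fun_prop
    refine map_mem_closure hcont (hv δ hδ) fun v' hv' => ?_
    have hweights : (1 + δ)⁻¹ + δ / (1 + δ) = 1 := by field_simp
    have hmem := hS (x := (x + δ • e, v')) hv' (y := (x - e, w)) hw
      (by positivity) (by positivity) hweights
    have hx : (1 + δ)⁻¹ • (x + δ • e) + (δ / (1 + δ)) • (x - e) = x := by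
      linear_combination (norm := module) hweights • x
    simpa only [mem_ofPred_eq, Prod.smul_mk, Prod.mk_add_mk, hx] using hmem
  have hlim : Tendsto (fun δ => average δ v) (𝓝[>] 0) (𝓝 v) := by
    have hcont : ContinuousAt (fun δ => average δ v) 0 := by
      have hinv : ContinuousAt (fun δ : ℝ => (1 + δ)⁻¹) 0 :=
        ContinuousAt.inv₀ (by fun_prop) (by norm_num)
      simp only [average, div_eq_mul_inv]
      fun_prop
    simpa [average] using hcont.tendsto.mono_left nhdsWithin_le_nhds
  exact isClosed_closure.mem_of_tendsto hlim (eventually_mem_nhdsWithin.mono haverage)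

end ConvexGraph

theorem nonempty_of_add_const_mem {Ω Y : Type*} [AddCommGroup Y] {A : Y → Set (Ω → Y)}
    (hA : ∀ x W, W ∈ A x → ∀ c, (fun ω => W ω + c) ∈ A (x + c)) (x y : Y) :
    (A x).Nonempty → (A y).Nonempty :=
  fun ⟨W, hW⟩ => ⟨_, add_sub_cancel x y ▸ hA x W hW (y - x)⟩

section SellPrice

variable {X E F : Type*} [AddCommGroup E] [Preorder F]

/-- The values dominated by the utility of some position `W + C`, where `W` is available from the
endowment `x`: the value set before taking the closure. -/
def attainableValues (U : E → F) (A : X → Set E) (x : X) (C : E) : Set F :=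
  {v | ∃ W ∈ A x, v ≤ U (W + C)}

/-- The value set `V(x, C)` of the endowment `x` and the claim `C`, for the utility `U` and the
available positions `A`. -/
def valueSet [TopologicalSpace F] (U : E → F) (A : X → Set E) (x : X) (C : E) : Set F :=
  closure (attainableValues U A x C)

/-- The set-valued sell price `P^s(C)` for the initial endowment `x₀`. -/
def sellPrice [Add X] [TopologicalSpace F] (U : E → F) (A : X → Set E) (x₀ : X) (C : E) : Set X :=
  {p | valueSet U A x₀ 0 ⊆ valueSet U A (x₀ + p) (-C)}

variable {U : E → F} {A : X → Set E}

theorem monotone_valueSet [Preorder X] [TopologicalSpace F] (hA : Monotone A) (C : E) :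
    Monotone fun x => valueSet U A x C :=
  fun _ _ hxy => closure_mono fun _ ⟨W, hW, hv⟩ => ⟨W, hA hxy hW, hv⟩

theorem isUpperSet_sellPrice [AddCommGroup X] [Preorder X] [IsOrderedAddMonoid X]
    [TopologicalSpace F] (hA : Monotone A) (x₀ : X) (C : E) : IsUpperSet (sellPrice U A x₀ C) :=
  fun _ _ hpq hp => hp.trans (monotone_valueSet hA _ (add_le_add_right hpq x₀))

end SellPrice

section Concave

variable {X E F : Type*} [AddCommGroup X] [Module ℝ X] [AddCommGroup E] [Module ℝ E]
  [AddCommGroup F] [PartialOrder F] [IsOrderedAddMonoid F] [Module ℝ F] [PosSMulMono ℝ F]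
  {U : E → F} {A : X → Set E}

theorem convex_graph_attainableValues (hU : ConcaveOn ℝ univ U)
    (hA : Convex ℝ {z : X × E | z.2 ∈ A z.1}) (C : E) :
    Convex ℝ {z : X × F | z.2 ∈ attainableValues U A z.1 C} := by
  rintro ⟨x, v⟩ ⟨W, hW, hv⟩ ⟨y, w⟩ ⟨Z, hZ, hw⟩ a b ha hb hab
  refine ⟨a • W + b • Z, hA (x := (x, W)) hW (y := (y, Z)) hZ ha hb hab, ?_⟩
  calc a • v + b • w ≤ a • U (W + C) + b • U (Z + C) := by gcongr
    _ ≤ U (a • (W + C) + b • (Z + C)) := hU.2 (mem_univ _) (mem_univ _) ha hb hab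
    _ = U (a • W + b • Z + C) := by
      rw [smul_add, smul_add, add_add_add_comm, Convex.combo_self hab]

variable [Preorder X] [IsOrderedAddMonoid X] [PosSMulMono ℝ X] [TopologicalSpace X]
  [IsTopologicalAddGroup X] [ContinuousSMul ℝ X]
  [TopologicalSpace F] [ContinuousAdd F] [ContinuousSMul ℝ F]

theorem isClosed_sellPrice (hU : ConcaveOn ℝ univ U) (hconv : Convex ℝ {z : X × E | z.2 ∈ A z.1})
    (hmono : Monotone A) (hne : ∀ x y, (A x).Nonempty → (A y).Nonempty)
    (hcone : (interior (Ici (0 : X))).Nonempty) (x₀ : X) (C : E) :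
    IsClosed (sellPrice U A x₀ C) := by
  refine isClosed_of_closure_subset fun p hp v hv => ?_
  obtain ⟨e, he⟩ := hcone
  obtain ⟨_, W, hW, -⟩ := closure_nonempty_iff.1 ⟨v, hv⟩
  obtain ⟨Z, hZ⟩ := hne x₀ (x₀ + p - e) ⟨W, hW⟩
  refine mem_closure_of_forall_mem_closure_add_smul (S := fun x => attainableValues U A x (-C))
    (convex_graph_attainableValues hU hconv (-C)) ⟨Z, hZ, le_rfl⟩ fun δ hδ => ?_
  have hprice : p + δ • e ∈ sellPrice U A x₀ C := interior_subset <|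
    add_mem_interior_of_mem_closure (isUpperSet_sellPrice hmono x₀ C) hp
      (smul_mem_interior_Ici_zero he hδ)
  rw [add_assoc]
  exact hprice hv

theorem stmt14_general (hU : ConcaveOn ℝ univ U) (hconv : Convex ℝ {z : X × E | z.2 ∈ A z.1})
    (hmono : Monotone A) (hne : ∀ x y, (A x).Nonempty → (A y).Nonempty)
    (hcone : (interior (Ici (0 : X))).Nonempty) (x₀ : X) (C : E) (p : X) :
    p ∈ frontier (sellPrice U A x₀ C) ↔
      valueSet U A x₀ 0 ⊆ valueSet U A (x₀ + p) (-C) ∧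
        ∀ ε ∈ interior (Ici (0 : X)), ¬ valueSet U A x₀ 0 ⊆ valueSet U A (x₀ + p - ε) (-C) := by
  simp only [add_sub_assoc]
  exact mem_frontier_iff_of_isUpperSet (isUpperSet_sellPrice hmono x₀ C)
    (isClosed_sellPrice hU hconv hmono hne hcone x₀ C) hcone

end Concave

section ExpectedUtility

variable {Ω Y ι κ : Type*} [Fintype Ω]

/-- The vector of expected utilities `E_{Q^j} u^i(Z)`, indexed by the pairs `(i, j)`; the measures
are given by their point masses. -/
def expectedUtility (Q : κ → Ω → ℝ) (u : ι → Y → ℝ) (Z : Ω → Y) : ι × κ → ℝ :=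
  fun ij => ∑ ω, Q ij.2 ω * u ij.1 (Z ω)

theorem concaveOn_expectedUtility [AddCommGroup Y] [Module ℝ Y] {Q : κ → Ω → ℝ} {u : ι → Y → ℝ}
    (hQ : ∀ j ω, 0 ≤ Q j ω) (hu : ∀ i, ConcaveOn ℝ univ (u i)) :
    ConcaveOn ℝ univ (expectedUtility Q u) := by
  refine ⟨convex_univ, fun W _ Z _ a b ha hb hab ij => ?_⟩
  have hpoint : ∀ ω, a * u ij.1 (W ω) + b * u ij.1 (Z ω) ≤ u ij.1 (a • W ω + b • Z ω) :=
    fun ω => (hu ij.1).2 (mem_univ _) (mem_univ _) ha hb hab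
  calc a * (∑ ω, Q ij.2 ω * u ij.1 (W ω)) + b * ∑ ω, Q ij.2 ω * u ij.1 (Z ω)
      = ∑ ω, Q ij.2 ω * (a * u ij.1 (W ω) + b * u ij.1 (Z ω)) := by
        simp only [Finset.mul_sum, ← Finset.sum_add_distrib, mul_add, mul_left_comm]
    _ ≤ ∑ ω, Q ij.2 ω * u ij.1 (a • W ω + b • Z ω) :=
        Finset.sum_le_sum fun ω _ => mul_le_mul_of_nonneg_left (hpoint ω) (hQ ij.2 ω)

end ExpectedUtility

theorem stmt14
    {d r s : ℕ} (hd : 0 < d) (hr : 0 < r) (hs : 0 < s)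
    {Ω : Type} [Fintype Ω] [Nonempty Ω]
    (Q : Fin s → Ω → ℝ)
    (hQ0 : ∀ j ω, 0 ≤ Q j ω) (hQ1 : ∀ j, ∑ ω : Ω, Q j ω = 1)
    (u : Fin r → (Fin d → ℝ) → ℝ)
    (hcont : ∀ i, Continuous (u i))
    (hconc : ∀ i, ConcaveOn ℝ Set.univ (u i))
    (hmono : ∀ i, Monotone (u i))
    (hstrict : ∀ i (x y : Fin d → ℝ), (∀ k, x k < y k) → u i x < u i y)
    (A : (Fin d → ℝ) → Set (Ω → Fin d → ℝ))
    (hAconv : ∀ x, Convex ℝ (A x))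
    (hAcomb : ∀ (x y : Fin d → ℝ) (a : ℝ), 0 ≤ a → a ≤ 1 →
      a • A x + (1 - a) • A y ⊆ A (a • x + (1 - a) • y))
    (hAmono : ∀ x y : Fin d → ℝ, x ≤ y → A x ⊆ A y)
    (hAtr : ∀ (x : Fin d → ℝ) (W : Ω → Fin d → ℝ), W ∈ A x →
      ∀ c : Fin d → ℝ, (fun ω => W ω + c) ∈ A (x + c))
    (hAcont : ∀ (x : Fin d → ℝ) (xk : ℕ → Fin d → ℝ), Antitone xk →
      Filter.Tendsto xk Filter.atTop (nhds x) → A x = ⋂ n, A (xk n))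
    (x0 : Fin d → ℝ) :
    let U : (Ω → Fin d → ℝ) → (Fin r × Fin s → ℝ) :=
      fun W ij => ∑ ω : Ω, Q ij.2 ω * u ij.1 (W ω)
    let V : (Fin d → ℝ) → (Ω → Fin d → ℝ) → Set (Fin r × Fin s → ℝ) :=
      fun x C => closure {v | ∃ W ∈ A x, v ≤ U (W + C)}
    let Pb : (Ω → Fin d → ℝ) → Set (Fin d → ℝ) :=
      fun C => {p | V x0 0 ⊆ V (x0 - p) C}
    let Ps : (Ω → Fin d → ℝ) → Set (Fin d → ℝ) :=
      fun C => {p | V x0 0 ⊆ V (x0 + p) (-C)}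
    ∀ (C : Ω → Fin d → ℝ) (p : Fin d → ℝ),
      p ∈ frontier (Ps C) ↔
        (V x0 0 ⊆ V (x0 + p) (-C) ∧
          ∀ ε : Fin d → ℝ, (∀ k, 0 < ε k) → ¬ V x0 0 ⊆ V (x0 + p - ε) (-C)) := by
  simpa only [interior_Ici_zero_pi] using! stmt14_general (A := A)
    (concaveOn_expectedUtility hQ0 hconc) (convex_graph_of_smul_add_smul_subset hAcomb)
    (fun x y => hAmono x y) (nonempty_of_add_const_mem hAtr) (nonempty_interior_Ici_zero_pi _) x0
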